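/- For all f₁, f₂ ∈ C_c^∞((0,∞)) (complex-valued), ∫₀^∞∫₀^∞ (t+s)^{-1} f₁(s) conj(f₂(t)) ds dt = ∫_ℝ (π / cosh(πξ)) (M f₁)(ξ) conj((M f₂)(ξ)) dξ, where (M f)(ξ) = (2π)^{-1/2} ∫₀^∞ f(t) t^{-1/2 - iξ} dt is the Mellin transform. (This diagonalizes the quadratic form of the Carleman operator, the Hankel operator with kernel h(t) = t^{-1}.) -/

import Mathlib

open MeasureTheory
open scoped ComplexOrder

noncomputable section

/-- Complex-valued test functions: smooth, compactly supported, support inside `(0,∞)`. -/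
def IsTestFun (f : ℝ → ℂ) : Prop :=
  ContDiff ℝ (⊤ : ℕ∞) f ∧ HasCompactSupport f ∧ tsupport f ⊆ Set.Ioi 0

/-- The Mellin transform `(M f)(ξ) = (2π)^{-1/2} ∫₀^∞ f(t) t^{-1/2 - iξ} dt`. -/
def mellinT (f : ℝ → ℂ) (ξ : ℝ) : ℂ :=
  (Real.sqrt (2 * Real.pi) : ℂ)⁻¹ *
    ∫ t in Set.Ioi (0:ℝ), f t * (t : ℂ) ^ ((-(1/2) : ℂ) - Complex.I * ξ)

/-!
Absolute convergence reduces the diagonalization to an identity between kernels: for `s, t > 0`,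
`(t + s)⁻¹ = (2π)⁻¹ ∫ (π / cosh (πξ)) s ^ (-1/2 - iξ) conj (t ^ (-1/2 - iξ)) dξ`. With
`x = log t - log s` this says that the hyperbolic secant is its own Fourier transform,
`∫ (π / cosh (πξ)) exp (ixξ) dξ = π / cosh (x / 2)`. The substitution `y = σ(2πξ)`, `σ` the
sigmoid, turns the left-hand side into the Beta integral `B(1/2 + w, 1/2 - w)` with
`w = ix / (2π)`, which equals `π / cos (πw)` by Euler's reflection formula.
-/

open scoped ComplexConjugate Real

lemma ofReal_cpow_eq_cexp_log_mul {x : ℝ} (hx : 0 < x) (z : ℂ) :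
    (x : ℂ) ^ z = Complex.exp (Real.log x * z) := by
  rw [Complex.cpow_def_of_ne_zero (by exact_mod_cast hx.ne'), Complex.ofReal_log hx.le]

section BetaIntegral

lemma sigmoid_eq_exp_half_div_two_mul_cosh_half (y : ℝ) :
    Real.sigmoid y = Real.exp (y / 2) / (2 * Real.cosh (y / 2)) := by
  have hexp : Real.exp (-y) = Real.exp (-(y / 2)) / Real.exp (y / 2) := by
    rw [← Real.exp_sub]
    ring_nf
  rw [Real.sigmoid_def, hexp, Real.cosh_eq]
  field_simp

lemma sigmoid_cpow_mul_one_sub_sigmoid_cpow (u v : ℂ) (y : ℝ) :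
    (Real.sigmoid y : ℂ) ^ u * (1 - Real.sigmoid y : ℂ) ^ v =
      Complex.exp ((u - v) * (y / 2)) * ((2 * Real.cosh (y / 2) : ℝ) : ℂ) ^ (-(u + v)) := by
  have hcosh : 0 < 2 * Real.cosh (y / 2) := by positivity
  have log_sigmoid (x : ℝ) :
      Real.log (Real.sigmoid x) = x / 2 - Real.log (2 * Real.cosh (x / 2)) := by
    rw [sigmoid_eq_exp_half_div_two_mul_cosh_half, Real.log_div (by positivity) (by positivity),
      Real.log_exp]
  have hneg : (1 - Real.sigmoid y : ℂ) = (Real.sigmoid (-y) : ℝ) := by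
    rw [Real.sigmoid_neg]
    push_cast
    rfl
  rw [hneg, ofReal_cpow_eq_cexp_log_mul (Real.sigmoid_pos y),
    ofReal_cpow_eq_cexp_log_mul (Real.sigmoid_pos (-y)), ofReal_cpow_eq_cexp_log_mul hcosh,
    log_sigmoid, log_sigmoid, neg_div, Real.cosh_neg, ← Complex.exp_add, ← Complex.exp_add]
  push_cast
  ring_nf

lemma sigmoid_deriv_smul_betaIntegrand (u v : ℂ) (y : ℝ) :
    (Real.sigmoid y * (1 - Real.sigmoid y)) •
        ((Real.sigmoid y : ℂ) ^ (u - 1) * (1 - Real.sigmoid y : ℂ) ^ (v - 1)) =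
      Complex.exp ((u - v) * (y / 2)) * ((2 * Real.cosh (y / 2) : ℝ) : ℂ) ^ (-(u + v)) := by
  have hσ : (Real.sigmoid y : ℂ) ≠ 0 := by exact_mod_cast (Real.sigmoid_pos y).ne'
  have hσ' : (1 - Real.sigmoid y : ℂ) ≠ 0 := by
    exact_mod_cast (sub_pos.2 (Real.sigmoid_lt_one y)).ne'
  rw [← sigmoid_cpow_mul_one_sub_sigmoid_cpow, Complex.cpow_sub _ _ hσ, Complex.cpow_sub _ _ hσ',
    Complex.cpow_one, Complex.cpow_one, Complex.real_smul]
  push_cast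
  field_simp

lemma integrable_cexp_mul_two_mul_cosh_cpow {u v : ℂ} (hu : 0 < u.re) (hv : 0 < v.re) :
    Integrable fun y : ℝ => Complex.exp ((u - v) * (y / 2)) *
      ((2 * Real.cosh (y / 2) : ℝ) : ℂ) ^ (-(u + v)) := by
  have h := Complex.betaIntegral_convergent hu hv
  rw [intervalIntegrable_iff_integrableOn_Ioo_of_le zero_le_one, ← Real.range_sigmoid,
    ← Set.image_univ, integrableOn_image_iff_integrableOn_deriv_smul_of_monotoneOn .univ
      (fun y _ => (Real.hasDerivAt_sigmoid y).hasDerivWithinAt)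
      (Real.sigmoid_monotone.monotoneOn _), integrableOn_univ] at h
  simpa only [sigmoid_deriv_smul_betaIntegrand] using h

lemma betaIntegral_eq_integral_cexp_mul_two_mul_cosh_cpow (u v : ℂ) :
    Complex.betaIntegral u v = ∫ y : ℝ, Complex.exp ((u - v) * (y / 2)) *
      ((2 * Real.cosh (y / 2) : ℝ) : ℂ) ^ (-(u + v)) := by
  rw [Complex.betaIntegral, intervalIntegral.integral_of_le zero_le_one,
    integral_Ioc_eq_integral_Ioo, ← Real.range_sigmoid, ← Set.image_univ,
    integral_image_eq_integral_deriv_smul_of_monotoneOn .univ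
      (fun y _ => (Real.hasDerivAt_sigmoid y).hasDerivWithinAt)
      (Real.sigmoid_monotone.monotoneOn _), setIntegral_univ]
  simp only [sigmoid_deriv_smul_betaIntegrand]

end BetaIntegral

section SechTransform

lemma betaIntegral_half_add_half_sub {w : ℂ} (hw : |w.re| < 1 / 2) :
    Complex.betaIntegral (1 / 2 + w) (1 / 2 - w) = π / Complex.cos (π * w) := by
  obtain ⟨hlo, hhi⟩ := abs_lt.1 hw
  have hΓ := Complex.Gamma_mul_Gamma_eq_betaIntegral (s := 1 / 2 + w) (t := 1 / 2 - w)
    (by norm_num; linarith) (by norm_num; linarith)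
  have hsub : 1 / 2 - w = 1 - (1 / 2 + w) := by ring
  have hsin : Complex.sin (π * (1 / 2 + w)) = Complex.cos (π * w) := by
    rw [← Complex.sin_add_pi_div_two]
    ring_nf
  rw [← hsin, ← Complex.Gamma_mul_Gamma_one_sub, ← hsub, hΓ, add_add_sub_cancel, add_halves,
    Complex.Gamma_one, one_mul]

lemma cexp_mul_two_mul_cosh_cpow_two_pi_mul (w : ℂ) (ξ : ℝ) :
    (2 * π) * (Complex.exp ((1 / 2 + w - (1 / 2 - w)) * ((2 * π * ξ : ℝ) / 2)) *
        ((2 * Real.cosh (2 * π * ξ / 2) : ℝ) : ℂ) ^ (-(1 / 2 + w + (1 / 2 - w)))) =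
      ((π / Real.cosh (π * ξ) : ℝ) : ℂ) * Complex.exp (2 * π * w * ξ) := by
  have hexp : (1 / 2 + w - (1 / 2 - w)) * ((2 * π * ξ : ℝ) / 2) = 2 * π * w * ξ := by
    push_cast
    ring
  have hpow : -(1 / 2 + w + (1 / 2 - w)) = -1 := by ring
  have harg : 2 * π * ξ / 2 = π * ξ := by ring
  rw [hexp, hpow, harg, Complex.cpow_neg_one]
  push_cast
  ring

lemma integrable_pi_div_cosh_mul_cexp {w : ℂ} (hw : |w.re| < 1 / 2) :
    Integrable fun ξ : ℝ =>
      ((π / Real.cosh (π * ξ) : ℝ) : ℂ) * Complex.exp (2 * π * w * ξ) := by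
  obtain ⟨hlo, hhi⟩ := abs_lt.1 hw
  have h := integrable_cexp_mul_two_mul_cosh_cpow (u := 1 / 2 + w) (v := 1 / 2 - w)
    (by norm_num; linarith) (by norm_num; linarith)
  simpa only [cexp_mul_two_mul_cosh_cpow_two_pi_mul] using
    (h.comp_mul_left' Real.two_pi_pos.ne').const_mul (2 * π : ℂ)

lemma integral_pi_div_cosh_mul_cexp {w : ℂ} (hw : |w.re| < 1 / 2) :
    ∫ ξ : ℝ, ((π / Real.cosh (π * ξ) : ℝ) : ℂ) * Complex.exp (2 * π * w * ξ) =
      π / Complex.cos (π * w) := by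
  have hπ : (π : ℂ) ≠ 0 := by exact_mod_cast Real.pi_ne_zero
  rw [← betaIntegral_half_add_half_sub hw, betaIntegral_eq_integral_cexp_mul_two_mul_cosh_cpow]
  simp only [← cexp_mul_two_mul_cosh_cpow_two_pi_mul]
  rw [integral_const_mul, Measure.integral_comp_mul_left (fun y : ℝ =>
    Complex.exp ((1 / 2 + w - (1 / 2 - w)) * (y / 2)) *
      ((2 * Real.cosh (y / 2) : ℝ) : ℂ) ^ (-(1 / 2 + w + (1 / 2 - w)))),
    abs_of_pos (inv_pos.2 Real.two_pi_pos), Complex.real_smul]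
  push_cast
  field_simp

lemma integrable_pi_div_cosh : Integrable fun ξ : ℝ => ((π / Real.cosh (π * ξ) : ℝ) : ℂ) := by
  simpa using integrable_pi_div_cosh_mul_cexp (w := 0) (by simp)

lemma integral_pi_div_cosh_mul_cexp_mul_I (x : ℝ) :
    ∫ ξ : ℝ, ((π / Real.cosh (π * ξ) : ℝ) : ℂ) * Complex.exp (x * ξ * Complex.I) =
      ((π / Real.cosh (x / 2) : ℝ) : ℂ) := by
  have hπ : (π : ℂ) ≠ 0 := by exact_mod_cast Real.pi_ne_zero
  have hexp (ξ : ℝ) :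
      x * ξ * Complex.I = 2 * π * (x / (2 * π) * Complex.I) * ξ := by field_simp
  have harg : π * (x / (2 * π) * Complex.I) = x / 2 * Complex.I := by field_simp
  have hre : |(x / (2 * π) * Complex.I : ℂ).re| < 1 / 2 := by
    rw [← Complex.ofReal_ofNat, ← Complex.ofReal_mul, ← Complex.ofReal_div, Complex.re_ofReal_mul]
    simp
  simp only [hexp]
  rw [integral_pi_div_cosh_mul_cexp hre, harg, Complex.cos_mul_I]
  push_cast
  rfl

end SechTransform

section Superposition

variable {α β 𝕜 : Type*} [MeasurableSpace α] [MeasurableSpace β] [RCLike 𝕜]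
  {μ : Measure α} {ν : Measure β} [SFinite μ] [SFinite ν]
  {m : α → 𝕜} {g₁ g₂ : β → 𝕜} {χ : α → β → 𝕜} {C : ℝ}

lemma integrable_mul_mul_conj_of_bdd (hm : Integrable m μ) (hg₁ : Integrable g₁ ν)
    (hg₂ : Integrable g₂ ν) (hχ : AEStronglyMeasurable (Function.uncurry χ) (μ.prod ν))
    (hC : ∀ᵐ p ∂μ.prod ν, ‖Function.uncurry χ p‖ ≤ C) :
    Integrable (fun p : α × β × β => m p.1 * (conj (g₂ p.2.1) * g₁ p.2.2) *
      (χ p.1 p.2.2 * conj (χ p.1 p.2.1))) (μ.prod (ν.prod ν)) := by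
  have hfst : Measure.QuasiMeasurePreserving (Prod.map id Prod.fst : α × β × β → α × β)
      (μ.prod (ν.prod ν)) (μ.prod ν) := QuasiMeasurePreserving.prodMap
    (Measure.QuasiMeasurePreserving.id μ) Measure.quasiMeasurePreserving_fst
  have hsnd : Measure.QuasiMeasurePreserving (Prod.map id Prod.snd : α × β × β → α × β)
      (μ.prod (ν.prod ν)) (μ.prod ν) := QuasiMeasurePreserving.prodMap
    (Measure.QuasiMeasurePreserving.id μ) Measure.quasiMeasurePreserving_snd
  refine (hm.mul_prod ((RCLike.conjCLE.integrable_comp_iff.2 hg₂).mul_prod hg₁)).mul_bdd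
    (c := C * C) ((hχ.comp_quasiMeasurePreserving hsnd).mul
      (RCLike.continuous_conj.comp_aestronglyMeasurable (hχ.comp_quasiMeasurePreserving hfst))) ?_
  filter_upwards [hfst.ae hC, hsnd.ae hC] with p hp₁ hp₂
  rw [norm_mul, RCLike.norm_conj]
  exact mul_le_mul hp₂ hp₁ (norm_nonneg _) ((norm_nonneg _).trans hp₂)

lemma integral_mul_integral_mul_conj_integral (hm : Integrable m μ) (hg₁ : Integrable g₁ ν)
    (hg₂ : Integrable g₂ ν) (hχ : AEStronglyMeasurable (Function.uncurry χ) (μ.prod ν))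
    (hC : ∀ᵐ p ∂μ.prod ν, ‖Function.uncurry χ p‖ ≤ C) :
    ∫ x, m x * (∫ s, g₁ s * χ x s ∂ν) * conj (∫ t, g₂ t * χ x t ∂ν) ∂μ =
      ∫ t, ∫ s, (∫ x, m x * (χ x s * conj (χ x t)) ∂μ) * g₁ s * conj (g₂ t) ∂ν ∂ν := by
  have hint := integrable_mul_mul_conj_of_bdd hm hg₁ hg₂ hχ hC
  have hfiber (x : α) : m x * (∫ s, g₁ s * χ x s ∂ν) * conj (∫ t, g₂ t * χ x t ∂ν) =
      ∫ p : β × β, m x * (conj (g₂ p.1) * g₁ p.2) * (χ x p.2 * conj (χ x p.1)) ∂ν.prod ν := by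
    rw [← integral_conj, mul_assoc, mul_comm (∫ s, _ ∂ν), ← integral_prod_mul,
      ← integral_const_mul]
    congr with p
    rw [map_mul]
    ring
  simp only [hfiber]
  rw [integral_integral_swap hint, integral_prod _ hint.integral_prod_right]
  congr with t
  congr with s
  rw [mul_assoc, ← integral_mul_const]
  congr with x
  ring

end Superposition

section Mellin

/-- The unitary character `t ↦ t ^ (-iξ)` of the multiplicative group `(0, ∞)`, the unimodular
part of the Mellin kernel `t ^ (-1/2 - iξ)`. It is written as an exponential of `Real.log t`, so
that it has modulus one for every real `t`. -/
def mellinCharacter (ξ t : ℝ) : ℂ :=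
  Complex.exp (-(ξ * Real.log t : ℝ) * Complex.I)

lemma norm_mellinCharacter (ξ t : ℝ) : ‖mellinCharacter ξ t‖ = 1 := by
  rw [mellinCharacter, ← Complex.ofReal_neg, Complex.norm_exp_ofReal_mul_I]

lemma measurable_uncurry_mellinCharacter : Measurable (Function.uncurry mellinCharacter) := by
  unfold mellinCharacter Function.uncurry
  fun_prop

lemma mellinCharacter_mul_conj (ξ s t : ℝ) :
    mellinCharacter ξ s * conj (mellinCharacter ξ t) =
      Complex.exp ((Real.log t - Real.log s : ℝ) * ξ * Complex.I) := by
  rw [mellinCharacter, mellinCharacter, ← Complex.exp_conj, ← Complex.exp_add]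
  simp only [map_mul, map_neg, Complex.conj_I, Complex.conj_ofReal]
  push_cast
  ring_nf

lemma ofReal_cpow_neg_half_sub_I_mul {t : ℝ} (ht : 0 < t) (ξ : ℝ) :
    (t : ℂ) ^ ((-(1 / 2) : ℂ) - Complex.I * ξ) =
      (t : ℂ) ^ ((1 / 2 : ℂ) - 1) * mellinCharacter ξ t := by
  rw [ofReal_cpow_eq_cexp_log_mul ht, ofReal_cpow_eq_cexp_log_mul ht, mellinCharacter,
    ← Complex.exp_add]
  push_cast
  ring_nf

lemma mellinT_eq_integral_mul_mellinCharacter (f : ℝ → ℂ) (ξ : ℝ) :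
    mellinT f ξ = (√(2 * π) : ℂ)⁻¹ *
      ∫ t in Set.Ioi (0 : ℝ), (t : ℂ) ^ ((1 / 2 : ℂ) - 1) • f t * mellinCharacter ξ t := by
  rw [mellinT]
  congr 1
  refine setIntegral_congr_fun measurableSet_Ioi fun t ht => ?_
  simp only [ofReal_cpow_neg_half_sub_I_mul ht, smul_eq_mul]
  ring

lemma ofReal_cpow_half_sub_one {t : ℝ} (ht : 0 < t) :
    (t : ℂ) ^ ((1 / 2 : ℂ) - 1) = ((√t)⁻¹ : ℝ) := by
  rw [Real.sqrt_eq_rpow, ← Real.rpow_neg ht.le, Complex.ofReal_cpow ht.le]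
  push_cast
  norm_num

lemma cosh_half_log_sub_log {s t : ℝ} (hs : 0 < s) (ht : 0 < t) :
    Real.cosh ((Real.log t - Real.log s) / 2) = (t + s) / (2 * √s * √t) := by
  have hlog : (Real.log t - Real.log s) / 2 = Real.log (√t / √s) := by
    rw [Real.log_div (by positivity) (by positivity), Real.log_sqrt ht.le, Real.log_sqrt hs.le]
    ring
  rw [hlog, Real.cosh_log (by positivity)]
  field_simp
  rw [Real.sq_sqrt hs.le, Real.sq_sqrt ht.le]

lemma integral_pi_div_cosh_mul_mellinCharacter {s t : ℝ} (hs : 0 < s) (ht : 0 < t) :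
    ∫ ξ : ℝ, ((π / Real.cosh (π * ξ) : ℝ) : ℂ) *
        (mellinCharacter ξ s * conj (mellinCharacter ξ t)) =
      ((2 * π * √s * √t / (t + s) : ℝ) : ℂ) := by
  simp only [mellinCharacter_mul_conj]
  rw [integral_pi_div_cosh_mul_cexp_mul_I, cosh_half_log_sub_log hs ht]
  congr 1
  field_simp

lemma integral_mul_mellinT_mul_conj_mellinT {m : ℝ → ℂ} {f₁ f₂ : ℝ → ℂ} (hm : Integrable m)
    (hf₁ : MellinConvergent f₁ (1 / 2)) (hf₂ : MellinConvergent f₂ (1 / 2)) :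
    ∫ ξ : ℝ, m ξ * mellinT f₁ ξ * conj (mellinT f₂ ξ) =
      ∫ t in Set.Ioi (0 : ℝ), ∫ s in Set.Ioi (0 : ℝ), ((2 * π * √s * √t)⁻¹ : ℝ) *
        (∫ ξ : ℝ, m ξ * (mellinCharacter ξ s * conj (mellinCharacter ξ t))) *
          f₁ s * conj (f₂ t) := by
  have hsqrt : (√(2 * π) : ℂ)⁻¹ * (√(2 * π) : ℂ)⁻¹ = ((2 * π)⁻¹ : ℝ) := by
    rw [← mul_inv, ← Complex.ofReal_mul, Real.mul_self_sqrt (by positivity), Complex.ofReal_inv]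
  have hmellin (ξ : ℝ) : m ξ * mellinT f₁ ξ * conj (mellinT f₂ ξ) =
      ((2 * π)⁻¹ : ℝ) * (m ξ *
        (∫ s in Set.Ioi (0 : ℝ), (s : ℂ) ^ ((1 / 2 : ℂ) - 1) • f₁ s * mellinCharacter ξ s) *
        conj (∫ t in Set.Ioi (0 : ℝ),
          (t : ℂ) ^ ((1 / 2 : ℂ) - 1) • f₂ t * mellinCharacter ξ t)) := by
    rw [mellinT_eq_integral_mul_mellinCharacter, mellinT_eq_integral_mul_mellinCharacter, map_mul,
      map_inv₀, Complex.conj_ofReal, ← hsqrt]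
    ring
  simp only [hmellin]
  rw [integral_const_mul, integral_mul_integral_mul_conj_integral hm hf₁ hf₂
    measurable_uncurry_mellinCharacter.aestronglyMeasurable
    (ae_of_all _ fun p => (norm_mellinCharacter p.1 p.2).le), ← integral_const_mul]
  refine setIntegral_congr_fun measurableSet_Ioi fun t ht => ?_
  rw [← integral_const_mul]
  refine setIntegral_congr_fun measurableSet_Ioi fun s hs => ?_
  simp only [ofReal_cpow_half_sub_one hs, ofReal_cpow_half_sub_one ht, smul_eq_mul, map_mul,
    Complex.conj_ofReal, mul_inv, Complex.ofReal_mul]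
  ring

lemma mellinConvergent_of_tsupport_subset_Ioi {E : Type*} [NormedAddCommGroup E] [NormedSpace ℂ E]
    {f : ℝ → E} (hf : LocallyIntegrableOn f (Set.Ioi 0)) (hcpt : HasCompactSupport f)
    (hsupp : tsupport f ⊆ Set.Ioi 0) (s : ℂ) : MellinConvergent f s := by
  have hpow : ContinuousOn (fun t : ℝ => (t : ℂ) ^ (s - 1)) (Set.Ioi 0) :=
    continuousOn_of_forall_continuousAt fun t ht =>
      Complex.continuousAt_ofReal_cpow_const t _ (Or.inr (ne_of_gt ht))
  have hint : IntegrableOn (fun t : ℝ => (t : ℂ) ^ (s - 1) • f t) (tsupport f) :=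
    (hf.continuousOn_smul isOpen_Ioi.isLocallyClosed hpow).integrableOn_compact_subset hsupp hcpt
  refine ((integrableOn_iff_integrable_of_support_subset fun t ht => ?_).1 hint).integrableOn
  exact subset_tsupport f (Function.support_smul_subset_right _ _ ht)

lemma IsTestFun.mellinConvergent {f : ℝ → ℂ} (hf : IsTestFun f) (s : ℂ) : MellinConvergent f s :=
  mellinConvergent_of_tsupport_subset_Ioi
    (hf.1.continuous.locallyIntegrable.locallyIntegrableOn _) hf.2.1 hf.2.2 s

end Mellin

theorem carleman_diagonalization_general {f₁ f₂ : ℝ → ℂ}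
    (hf₁ : MellinConvergent f₁ (1 / 2)) (hf₂ : MellinConvergent f₂ (1 / 2)) :
    ∫ t in Set.Ioi (0 : ℝ), ∫ s in Set.Ioi (0 : ℝ),
        (((t + s)⁻¹ : ℝ) : ℂ) * f₁ s * conj (f₂ t) =
      ∫ ξ : ℝ, ((π / Real.cosh (π * ξ) : ℝ) : ℂ) * mellinT f₁ ξ * conj (mellinT f₂ ξ) := by
  rw [integral_mul_mellinT_mul_conj_mellinT integrable_pi_div_cosh hf₁ hf₂]
  refine setIntegral_congr_fun measurableSet_Ioi fun t (ht : 0 < t) =>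
    setIntegral_congr_fun measurableSet_Ioi fun s (hs : 0 < s) => ?_
  have hkernel : (t + s)⁻¹ = (2 * π * √s * √t)⁻¹ * (2 * π * √s * √t / (t + s)) := by
    field_simp
  simp only [integral_pi_div_cosh_mul_mellinCharacter hs ht, ← Complex.ofReal_mul, ← hkernel]

/-- Diagonalization of the Carleman operator: for test functions `f₁, f₂`,
`∫₀^∞∫₀^∞ (t+s)⁻¹ f₁(s) conj(f₂(t)) ds dt = ∫_ℝ (π/cosh(πξ)) (Mf₁)(ξ) conj((Mf₂)(ξ)) dξ`. -/
theorem carleman_diagonalization (f₁ f₂ : ℝ → ℂ)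
    (hf₁ : IsTestFun f₁) (hf₂ : IsTestFun f₂) :
    ∫ t in Set.Ioi (0:ℝ), ∫ s in Set.Ioi (0:ℝ),
        (((t + s)⁻¹ : ℝ) : ℂ) * f₁ s * (starRingEnd ℂ) (f₂ t) =
      ∫ ξ : ℝ, ((Real.pi / Real.cosh (Real.pi * ξ) : ℝ) : ℂ) *
        mellinT f₁ ξ * (starRingEnd ℂ) (mellinT f₂ ξ) := by
  exact carleman_diagonalization_general (hf₁.mellinConvergent _) (hf₂.mellinConvergent _)
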